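/- arXiv:2407.20869 — 5 statements merged into one kernel-verified Lean document; each statement's English description precedes it below -/
import Mathlib

section
/- Let A, γ, k, η, β be real constants with η ≠ k, let t ∈ ℝ, and let H, G : ℝ × ℝ → ℝ² be given on {v > 0} by H(v,w) = (v, v(w+β/(η−k))) and G(v,w) = (v e^{(η−k)t}(w+β/(η−k)) − vβ/(η−k) − A v^{γ+1} e^{k(γ+1)t} e^{(η−k)t}, v(w+β/(η−k))² e^{(η−k)t} − (w+β/(η−k)) e^{(η−k)t} A v^{γ+1} e^{k(γ+1)t} − (β/(η−k))(w+β/(η−k))v). Then at every point (v,w) with v > 0, the Jacobian matrices DH and DG of H and G satisfy det(DG − λ₁ DH) = 0 and det(DG − λ₂ DH) = 0, and moreover (DG − λ₁ DH)·(1,0)ᵀ = 0 and (DG − λ₂ DH)·(1, Aγ v^{γ−1} e^{k(γ+1)t})ᵀ = 0, where λ₁ = λ₁(v,w,t) and λ₂ = λ₂(v,w,t). -/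
/-!
On `v ≠ 0` the flux is a scalar multiple of the conserved quantity, `G = λ₂ H`, so
`DG = λ₂ DH + H ⊗ ∇λ₂`. Hence any direction in which `λ₂` is stationary is an eigenvector for `λ₂`.
Along the `v`-axis `H` is linear, `H = v ∂H/∂v`, so the rank-one term acts on `∂H/∂v` as the scalar
`v ∂λ₂/∂v`; this makes `(1, 0)` an eigenvector for `λ₁ = λ₂ + v ∂λ₂/∂v`.
-/

/-- Conserved quantity H of the transformed system (case η ≠ k), on states p = (v, w). -/
noncomputable def Hmap (β η k : ℝ) (p : Fin 2 → ℝ) : Fin 2 → ℝ :=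
  ![p 0, p 0 * (p 1 + β / (η - k))]

/-- Flux G of the transformed system (case η ≠ k) at time t, on states p = (v, w). -/
noncomputable def Gmap (A γ k η β t : ℝ) (p : Fin 2 → ℝ) : Fin 2 → ℝ :=
  ![p 0 * Real.exp ((η - k) * t) * (p 1 + β / (η - k)) - p 0 * β / (η - k)
      - A * p 0 ^ (γ + 1) * Real.exp (k * (γ + 1) * t) * Real.exp ((η - k) * t),
    p 0 * (p 1 + β / (η - k)) ^ (2 : ℕ) * Real.exp ((η - k) * t)
      - (p 1 + β / (η - k)) * Real.exp ((η - k) * t) * A * p 0 ^ (γ + 1)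
          * Real.exp (k * (γ + 1) * t)
      - (β / (η - k)) * (p 1 + β / (η - k)) * p 0]

open Filter Matrix Topology

section ProductRule

variable {𝕜 E F : Type*} [NontriviallyNormedField 𝕜] [NormedAddCommGroup E] [NormedSpace 𝕜 E]
  [NormedAddCommGroup F] [NormedSpace 𝕜 F]

lemma hasFDerivAt_apply_eq_of_eventuallyEq_smul {G H : E → F} {σ : E → 𝕜} {G' H' : E →L[𝕜] F}
    {σ' : E →L[𝕜] 𝕜} {p : E} (hG : HasFDerivAt G G' p) (hH : HasFDerivAt H H' p)
    (hσ : HasFDerivAt σ σ' p) (hGH : G =ᶠ[𝓝 p] fun q => σ q • H q) (x : E) :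
    G' x = σ p • H' x + σ' x • H p := by
  simp [hG.unique ((hσ.fun_smul hH).congr_of_eventuallyEq hGH)]

end ProductRule

/-- The characteristic speed `λ₁`, as a function of the state `p = (v, w)`. -/
noncomputable def firstSpeed (A γ k η β t : ℝ) (p : Fin 2 → ℝ) : ℝ :=
  -β / (η - k) +
    (p 1 + β / (η - k) - A * (γ + 1) * p 0 ^ γ * Real.exp (k * (γ + 1) * t)) *
      Real.exp ((η - k) * t)

/-- The characteristic speed `λ₂`, as a function of the state `p = (v, w)`. -/
noncomputable def secondSpeed (A γ k η β t : ℝ) (p : Fin 2 → ℝ) : ℝ :=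
  -β / (η - k) +
    (p 1 + β / (η - k) - A * p 0 ^ γ * Real.exp (k * (γ + 1) * t)) * Real.exp ((η - k) * t)

/-- The gradient of `λ₂` at the state `p = (v, w)`, as a linear functional. -/
noncomputable def secondSpeedDeriv (A γ k η t : ℝ) (p : Fin 2 → ℝ) : (Fin 2 → ℝ) →L[ℝ] ℝ :=
  Real.exp ((η - k) * t) • (ContinuousLinearMap.proj 1 -
    (A * γ * p 0 ^ (γ - 1) * Real.exp (k * (γ + 1) * t)) • ContinuousLinearMap.proj 0)

section Speeds

variable {A γ k η β t : ℝ} {p : Fin 2 → ℝ}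

lemma secondSpeedDeriv_apply (x : Fin 2 → ℝ) :
    secondSpeedDeriv A γ k η t p x = Real.exp ((η - k) * t) *
      (x 1 - A * γ * p 0 ^ (γ - 1) * Real.exp (k * (γ + 1) * t) * x 0) :=
  rfl

lemma hasFDerivAt_secondSpeed (hp : p 0 ≠ 0) :
    HasFDerivAt (secondSpeed A γ k η β t) (secondSpeedDeriv A γ k η t p) p := by
  have hcoord (i : Fin 2) : HasFDerivAt (fun q : Fin 2 → ℝ => q i)
      (ContinuousLinearMap.proj (R := ℝ) (φ := fun _ => ℝ) i) p :=
    hasFDerivAt_apply i p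
  have hpow := (((hcoord 0).rpow_const (p := γ) (Or.inl hp)).const_mul A).mul_const
    (Real.exp (k * (γ + 1) * t))
  refine (((((hcoord 1).add_const (β / (η - k))).sub hpow).mul_const
    (Real.exp ((η - k) * t))).const_add (-β / (η - k))).congr_fderiv ?_
  ext x
  simp only [secondSpeedDeriv_apply, _root_.smul_apply, _root_.sub_apply,
    ContinuousLinearMap.proj_apply, smul_eq_mul]
  ring

lemma secondSpeedDeriv_apply_eq_zero :
    secondSpeedDeriv A γ k η t p
      ![1, A * γ * p 0 ^ (γ - 1) * Real.exp (k * (γ + 1) * t)] = 0 := by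
  simp [secondSpeedDeriv_apply]

lemma firstSpeed_eq_secondSpeed_add (hp : p 0 ≠ 0) :
    firstSpeed A γ k η β t p =
      secondSpeed A γ k η β t p + secondSpeedDeriv A γ k η t p ![1, 0] * p 0 := by
  have hpow : p 0 ^ γ = p 0 ^ (γ - 1) * p 0 := by
    rw [← Real.rpow_add_one hp, sub_add_cancel]
  simp only [firstSpeed, secondSpeed, secondSpeedDeriv_apply, hpow, cons_val_zero, cons_val_one]
  ring

lemma Gmap_eq_secondSpeed_smul_Hmap (hp : p 0 ≠ 0) :
    Gmap A γ k η β t p = secondSpeed A γ k η β t p • Hmap β η k p := by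
  ext i
  fin_cases i <;>
    simp only [Gmap, Hmap, secondSpeed, Real.rpow_add_one hp, Fin.zero_eta, Fin.mk_one,
      cons_val_zero, cons_val_one, Pi.smul_apply, smul_eq_mul] <;>
    ring

lemma Gmap_eventuallyEq_secondSpeed_smul_Hmap (hp : p 0 ≠ 0) :
    Gmap A γ k η β t =ᶠ[𝓝 p] fun q => secondSpeed A γ k η β t q • Hmap β η k q :=
  ((continuous_apply 0).continuousAt.eventually_ne hp).mono fun _ =>
    Gmap_eq_secondSpeed_smul_Hmap

end Speeds

section Eigenvectors

variable {A γ k η β t : ℝ} {p : Fin 2 → ℝ} {H' G' : (Fin 2 → ℝ) →L[ℝ] (Fin 2 → ℝ)}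

lemma Hmap_eq_smul_hasFDerivAt_apply (hH : HasFDerivAt (Hmap β η k) H' p) :
    Hmap β η k p = p 0 • H' ![1, 0] := by
  have hline : HasLineDerivAt ℝ (Hmap β η k) ![1, p 1 + β / (η - k)] p ![1, 0] := by
    have hlin : (fun s : ℝ => Hmap β η k (p + s • ![1, 0])) =
        fun s => (p 0 + s) • ![1, p 1 + β / (η - k)] := by
      ext s i
      fin_cases i <;> simp [Hmap]
    rw [HasLineDerivAt, hlin]
    simpa only [one_smul] using
      ((hasDerivAt_id' (0 : ℝ)).const_add (p 0)).smul_const ![1, p 1 + β / (η - k)]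
  rw [(hH.hasLineDerivAt _).unique hline]
  simp [Hmap]

lemma Gmap_hasFDerivAt_apply_eq_firstSpeed_smul (hp : p 0 ≠ 0)
    (hH : HasFDerivAt (Hmap β η k) H' p) (hG : HasFDerivAt (Gmap A γ k η β t) G' p) :
    G' ![1, 0] = firstSpeed A γ k η β t p • H' ![1, 0] := by
  rw [hasFDerivAt_apply_eq_of_eventuallyEq_smul hG hH (hasFDerivAt_secondSpeed hp)
      (Gmap_eventuallyEq_secondSpeed_smul_Hmap hp), Hmap_eq_smul_hasFDerivAt_apply hH, smul_smul,
    ← add_smul, ← firstSpeed_eq_secondSpeed_add hp]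

lemma Gmap_hasFDerivAt_apply_eq_secondSpeed_smul (hp : p 0 ≠ 0)
    (hH : HasFDerivAt (Hmap β η k) H' p) (hG : HasFDerivAt (Gmap A γ k η β t) G' p)
    {x : Fin 2 → ℝ} (hx : secondSpeedDeriv A γ k η t p x = 0) :
    G' x = secondSpeed A γ k η β t p • H' x := by
  rw [hasFDerivAt_apply_eq_of_eventuallyEq_smul hG hH (hasFDerivAt_secondSpeed hp)
    (Gmap_eventuallyEq_secondSpeed_smul_Hmap hp), hx, zero_smul, add_zero]

end Eigenvectors

/-- at every point with v > 0, the Jacobian matrices DH and DG of H and G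
satisfy det(DG − λᵢ DH) = 0 for i = 1,2, with eigenvectors (1,0)ᵀ for λ₁ and
(1, Aγ v^{γ−1} e^{k(γ+1)t})ᵀ for λ₂. -/
theorem jacobian_eigenstructure_eta_ne_k
    (A γ k η β t : ℝ) (hηk : η ≠ k) (v w : ℝ) (hv : 0 < v)
    (lam1 lam2 : ℝ)
    (hlam1 : lam1 = -β / (η - k) +
      (w + β / (η - k) - A * (γ + 1) * v ^ γ * Real.exp (k * (γ + 1) * t)) *
        Real.exp ((η - k) * t))
    (hlam2 : lam2 = -β / (η - k) +
      (w + β / (η - k) - A * v ^ γ * Real.exp (k * (γ + 1) * t)) *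
        Real.exp ((η - k) * t))
    (DH DG : Matrix (Fin 2) (Fin 2) ℝ)
    (hDH : HasFDerivAt (Hmap β η k)
      (LinearMap.toContinuousLinearMap DH.mulVecLin) ![v, w])
    (hDG : HasFDerivAt (Gmap A γ k η β t)
      (LinearMap.toContinuousLinearMap DG.mulVecLin) ![v, w]) :
    (DG - lam1 • DH).det = 0 ∧ (DG - lam2 • DH).det = 0 ∧
    (DG - lam1 • DH).mulVec ![1, 0] = 0 ∧
    (DG - lam2 • DH).mulVec ![1, A * γ * v ^ (γ - 1) * Real.exp (k * (γ + 1) * t)] = 0 := by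
  have hp : (![v, w] : Fin 2 → ℝ) 0 ≠ 0 := hv.ne'
  have hker₁ : (DG - lam1 • DH) *ᵥ ![1, 0] = 0 := by
    rw [hlam1, sub_mulVec, smul_mulVec, sub_eq_zero]
    exact Gmap_hasFDerivAt_apply_eq_firstSpeed_smul hp hDH hDG
  have hker₂ : (DG - lam2 • DH) *ᵥ
      ![1, A * γ * v ^ (γ - 1) * Real.exp (k * (γ + 1) * t)] = 0 := by
    rw [hlam2, sub_mulVec, smul_mulVec, sub_eq_zero]
    exact Gmap_hasFDerivAt_apply_eq_secondSpeed_smul hp hDH hDG secondSpeedDeriv_apply_eq_zero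
  have hdet {M : Matrix (Fin 2) (Fin 2) ℝ} {a : ℝ} (h : M *ᵥ ![1, a] = 0) : M.det = 0 :=
    exists_mulVec_eq_zero_iff.1 ⟨_, fun h0 => one_ne_zero (congrFun h0 0), h⟩
  exact ⟨hdet hker₁, hdet hker₂, hker₁, hker₂⟩
end

section
/- Let A, γ, k, η, β be real constants with A < 0, γ < 0, γ ≠ −1 and η ≠ k, and fix t ∈ ℝ. Then for every v > 0 and w ∈ ℝ: (i) the directional derivative of λ₁(·,·,t) in the direction r₁ = (1,0) equals −Aγ(γ+1)v^{γ−1}e^{k(γ+1)t}e^{(η−k)t} and is nonzero (genuine nonlinearity of the 1-family); (ii) the directional derivative of λ₂(·,·,t) in the direction r₂ = (1, Aγ v^{γ−1} e^{k(γ+1)t}) equals 0, i.e. ∂λ₂/∂v + Aγ v^{γ−1} e^{k(γ+1)t} · ∂λ₂/∂w = 0 (linear degeneracy of the 2-family). -/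
/-!
Replacing `A` by `A * (γ + 1)` turns `λ₂` into `λ₁`, so one differentiation in `v` serves both
families. The speed `λ₂` depends on `(v, w)` only through `w - A * v ^ γ * e^{k(γ+1)t}`, and `r₂` is
tangent to the level curves of this function. The derivative of `λ₁` along `r₁` is a product of
factors vanishing only for `A = 0`, `γ = 0` or `γ = -1`.
-/

/-- Characteristic speed λ₁ of the transformed Keyfitz–Kranzer system (case η ≠ k). -/
noncomputable def lambda1 (A γ k η β : ℝ) (v w t : ℝ) : ℝ :=
  -β / (η - k) +
    (w + β / (η - k) - A * (γ + 1) * v ^ γ * Real.exp (k * (γ + 1) * t)) *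
      Real.exp ((η - k) * t)

/-- Characteristic speed λ₂ of the transformed Keyfitz–Kranzer system (case η ≠ k). -/
noncomputable def lambda2 (A γ k η β : ℝ) (v w t : ℝ) : ℝ :=
  -β / (η - k) +
    (w + β / (η - k) - A * v ^ γ * Real.exp (k * (γ + 1) * t)) *
      Real.exp ((η - k) * t)

section CharacteristicSpeeds

variable (A γ k η β w t : ℝ) {v : ℝ}

lemma lambda1_eq_lambda2 (v : ℝ) :
    lambda1 A γ k η β v w t = lambda2 (A * (γ + 1)) γ k η β v w t :=
  rfl

lemma hasDerivAt_lambda2_left (h : v ≠ 0 ∨ 1 ≤ γ) :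
    HasDerivAt (fun x : ℝ => lambda2 A γ k η β x w t)
      (-(A * (γ * v ^ (γ - 1)) * Real.exp (k * (γ + 1) * t)) * Real.exp ((η - k) * t)) v :=
  (((((Real.hasDerivAt_rpow_const h).const_mul A).mul_const _).const_sub _).mul_const _).const_add _

lemma hasDerivAt_lambda2_right (v : ℝ) :
    HasDerivAt (fun y : ℝ => lambda2 A γ k η β v y t) (Real.exp ((η - k) * t)) w := by
  have h : HasDerivAt (fun y : ℝ => lambda2 A γ k η β v y t) (1 * Real.exp ((η - k) * t)) w :=
    ((((hasDerivAt_id' w).add_const _).sub_const _).mul_const _).const_add _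
  rwa [one_mul] at h

lemma hasDerivAt_lambda1_left (h : v ≠ 0 ∨ 1 ≤ γ) :
    HasDerivAt (fun x : ℝ => lambda1 A γ k η β x w t)
      (-A * γ * (γ + 1) * v ^ (γ - 1) * Real.exp (k * (γ + 1) * t) * Real.exp ((η - k) * t)) v := by
  simp only [lambda1_eq_lambda2]
  convert hasDerivAt_lambda2_left (A * (γ + 1)) γ k η β w t h using 1
  ring

variable {A γ} in
lemma deriv_lambda1_left_ne_zero (hA : A ≠ 0) (hγ : γ ≠ 0) (hγ1 : γ ≠ -1) (hv : 0 < v) :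
    deriv (fun x : ℝ => lambda1 A γ k η β x w t) v ≠ 0 := by
  have hγ1' : γ + 1 ≠ 0 := fun h => hγ1 (eq_neg_of_add_eq_zero_left h)
  have hpow : v ^ (γ - 1) ≠ 0 := (Real.rpow_pos_of_pos hv _).ne'
  rw [(hasDerivAt_lambda1_left A γ k η β w t (.inl hv.ne')).deriv]
  simp [hA, hγ, hγ1', hpow]

lemma linear_degeneracy_lambda2 (h : v ≠ 0 ∨ 1 ≤ γ) :
    deriv (fun x : ℝ => lambda2 A γ k η β x w t) v +
      A * γ * v ^ (γ - 1) * Real.exp (k * (γ + 1) * t) *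
        deriv (fun y : ℝ => lambda2 A γ k η β v y t) w = 0 := by
  rw [(hasDerivAt_lambda2_left A γ k η β w t h).deriv,
    (hasDerivAt_lambda2_right A γ k η β w t v).deriv]
  ring

end CharacteristicSpeeds

theorem genuine_nonlinearity_and_linear_degeneracy_general
    (A γ k η β t : ℝ) (hA : A ≠ 0) (hγ : γ ≠ 0) (hγ1 : γ ≠ -1) (hηk : η ≠ k) :
    ∀ v : ℝ, 0 < v → ∀ w : ℝ,
      (deriv (fun x : ℝ => lambda1 A γ k η β x w t) v =
          -A * γ * (γ + 1) * v ^ (γ - 1) * Real.exp (k * (γ + 1) * t) *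
            Real.exp ((η - k) * t) ∧
        -A * γ * (γ + 1) * v ^ (γ - 1) * Real.exp (k * (γ + 1) * t) *
            Real.exp ((η - k) * t) ≠ 0) ∧
      deriv (fun x : ℝ => lambda2 A γ k η β x w t) v +
          A * γ * v ^ (γ - 1) * Real.exp (k * (γ + 1) * t) *
            deriv (fun y : ℝ => lambda2 A γ k η β v y t) w = 0 := by
  intro v hv w
  have hderiv := (hasDerivAt_lambda1_left A γ k η β w t (.inl hv.ne')).deriv
  have hne := deriv_lambda1_left_ne_zero k η β w t hA hγ hγ1 hv
  exact ⟨⟨hderiv, hderiv ▸ hne⟩, linear_degeneracy_lambda2 A γ k η β w t (.inl hv.ne')⟩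

/-- the 1-family is genuinely nonlinear: the directional derivative of λ₁ in
the direction r₁=(1,0) (i.e. ∂λ₁/∂v) equals −Aγ(γ+1)v^{γ−1}e^{k(γ+1)t}e^{(η−k)t} ≠ 0;
the 2-family is linearly degenerate: ∂λ₂/∂v + Aγ v^{γ−1} e^{k(γ+1)t} ∂λ₂/∂w = 0. -/
theorem genuine_nonlinearity_and_linear_degeneracy
    (A γ k η β t : ℝ) (hA : A < 0) (hγ : γ < 0) (hγ1 : γ ≠ -1) (hηk : η ≠ k) :
    ∀ v : ℝ, 0 < v → ∀ w : ℝ,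
      (deriv (fun x : ℝ => lambda1 A γ k η β x w t) v =
          -A * γ * (γ + 1) * v ^ (γ - 1) * Real.exp (k * (γ + 1) * t) *
            Real.exp ((η - k) * t) ∧
        -A * γ * (γ + 1) * v ^ (γ - 1) * Real.exp (k * (γ + 1) * t) *
            Real.exp ((η - k) * t) ≠ 0) ∧
      deriv (fun x : ℝ => lambda2 A γ k η β x w t) v +
          A * γ * v ^ (γ - 1) * Real.exp (k * (γ + 1) * t) *
            deriv (fun y : ℝ => lambda2 A γ k η β v y t) w = 0 :=
  genuine_nonlinearity_and_linear_degeneracy_general A γ k η β t hA.ne hγ.ne hγ1 hηk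
end

section
/- Let A, γ, k, β be real constants and fix t ∈ ℝ. Let H, G : ℝ × ℝ → ℝ² be given on {v > 0} by H(v,w) = (v, vw) and G(v,w) = (v(w+βt) − A v^{γ+1} e^{k(γ+1)t}, vw(w+βt) − A w v^{γ+1} e^{k(γ+1)t}). Then at every point (v,w) with v > 0, the Jacobian matrices DH and DG satisfy det(DG − μ₁ DH) = 0 and det(DG − μ₂ DH) = 0, and (DG − μ₁ DH)·(1,0)ᵀ = 0 and (DG − μ₂ DH)·(1, Aγ v^{γ−1} e^{k(γ+1)t})ᵀ = 0, where μ₁ = (w + βt) − A(γ+1)v^γ e^{k(γ+1)t} and μ₂ = (w + βt) − A v^γ e^{k(γ+1)t}. -/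
/-!
Where `v ≠ 0` the flux is a scalar multiple of the conserved quantity, `G = φ • H`, with
`φ(v, w) = w + βt - P(v)` and `P(v) = A v ^ γ e^{k(γ+1)t}`. Hence
`DG - μ DH = (φ - μ) DH + H ⊗ ∇φ`. For `μ = φ` only the rank-one term survives, and it kills
`(1, P'(v))`, which is tangent to the level curve of `φ`. Since `H = v ∂H/∂v`, the vector `(1, 0)`
is killed for `μ = φ + v ∂φ/∂v = φ - v P'(v)`.
-/

/-- Conserved quantity H of the transformed system in the case η = k, on states p = (v, w). -/
noncomputable def HmapEq (β t : ℝ) (p : Fin 2 → ℝ) : Fin 2 → ℝ :=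
  ![p 0, p 0 * p 1]

/-- Flux G of the transformed system in the case η = k at time t, on states p = (v, w). -/
noncomputable def GmapEq (A γ k β t : ℝ) (p : Fin 2 → ℝ) : Fin 2 → ℝ :=
  ![p 0 * (p 1 + β * t) - A * p 0 ^ (γ + 1) * Real.exp (k * (γ + 1) * t),
    p 0 * p 1 * (p 1 + β * t) - A * p 1 * p 0 ^ (γ + 1) * Real.exp (k * (γ + 1) * t)]

open Filter Topology

section SmulDerivative

variable {𝕜 E F : Type*} [NontriviallyNormedField 𝕜] [NormedAddCommGroup E] [NormedSpace 𝕜 E]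
  [NormedAddCommGroup F] [NormedSpace 𝕜 F] {φ : E → 𝕜} {H G : E → F} {φ' : E →L[𝕜] 𝕜}
  {H' G' : E →L[𝕜] F} {p : E}

lemma hasFDerivAt_apply_of_eventuallyEq_smul (hφ : HasFDerivAt φ φ' p) (hH : HasFDerivAt H H' p)
    (hG : HasFDerivAt G G' p) (hGH : G =ᶠ[𝓝 p] φ • H) (u : E) :
    G' u = φ p • H' u + φ' u • H p := by
  rw [hG.unique ((hφ.smul hH).congr_of_eventuallyEq hGH)]
  simp

lemma hasFDerivAt_apply_eq_smul_of_apply_eq_zero {u : E} (hφ : HasFDerivAt φ φ' p)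
    (hH : HasFDerivAt H H' p) (hG : HasFDerivAt G G' p) (hGH : G =ᶠ[𝓝 p] φ • H)
    (hu : φ' u = 0) : G' u = φ p • H' u := by
  simpa [hu] using hasFDerivAt_apply_of_eventuallyEq_smul hφ hH hG hGH u

lemma hasFDerivAt_apply_eq_smul_of_eq_smul_apply {r : 𝕜} {u : E}
    (hφ : HasFDerivAt φ φ' p) (hH : HasFDerivAt H H' p) (hG : HasFDerivAt G G' p)
    (hGH : G =ᶠ[𝓝 p] φ • H) (hu : H p = r • H' u) : G' u = (φ p + r * φ' u) • H' u := by
  rw [hasFDerivAt_apply_of_eventuallyEq_smul hφ hH hG hGH u, hu, smul_smul, mul_comm, ← add_smul]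

end SmulDerivative

lemma pencil_mulVec_eq_zero_iff {R m n : Type*} [Ring R] [Fintype n] {M N : Matrix m n R}
    {μ : R} {x : n → R} :
    (M - μ • N).mulVec x = 0 ↔ M.mulVec x = μ • N.mulVec x := by
  rw [Matrix.sub_mulVec, Matrix.smul_mulVec, sub_eq_zero]

/-- The scalar `φ(v, w) = w + c - P(v)` for which the flux of the Keyfitz–Kranzer system is
`φ • H`, on states `p = (v, w)`; in the transformed system `c = βt`. -/
def transportSpeed (c : ℝ) (P : ℝ → ℝ) (p : Fin 2 → ℝ) : ℝ :=
  p 1 + c - P (p 0)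

/-- The pressure term `P(v) = A v ^ γ e^{k(γ+1)t}` of the transformed system in the case `η = k`. -/
noncomputable def pressure (A γ k t v : ℝ) : ℝ :=
  A * v ^ γ * Real.exp (k * (γ + 1) * t)

lemma hasFDerivAt_transportSpeed {P : ℝ → ℝ} {P' : ℝ} {p : Fin 2 → ℝ} (c : ℝ)
    (hP : HasDerivAt P P' (p 0)) :
    HasFDerivAt (transportSpeed c P)
      (ContinuousLinearMap.proj (R := ℝ) (φ := fun _ : Fin 2 => ℝ) 1
        - P' • ContinuousLinearMap.proj (R := ℝ) (φ := fun _ : Fin 2 => ℝ) 0) p :=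
  ((hasFDerivAt_apply 1 p).add_const c).sub (hP.comp_hasFDerivAt p (hasFDerivAt_apply 0 p))

lemma HmapEq_add_smul (β t s : ℝ) (p : Fin 2 → ℝ) :
    HmapEq β t (p + s • ![1, 0]) = HmapEq β t p + s • ![1, p 1] := by
  ext i
  fin_cases i <;> simp [HmapEq, add_mul]

lemma hasFDerivAt_HmapEq_apply {β t : ℝ} {p : Fin 2 → ℝ} {H' : (Fin 2 → ℝ) →L[ℝ] Fin 2 → ℝ}
    (hH : HasFDerivAt (HmapEq β t) H' p) : H' ![1, 0] = ![1, p 1] := by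
  have hline : HasDerivAt (fun s : ℝ => HmapEq β t (p + s • ![1, 0])) ![1, p 1] 0 := by
    simpa only [HmapEq_add_smul, id_eq, one_smul] using
      ((hasDerivAt_id (0 : ℝ)).smul_const ![1, p 1]).const_add (HmapEq β t p)
  exact (hH.hasLineDerivAt ![1, 0]).unique hline

lemma hasDerivAt_pressure {A γ k t v : ℝ} (hv : v ≠ 0) :
    HasDerivAt (pressure A γ k t) (A * γ * v ^ (γ - 1) * Real.exp (k * (γ + 1) * t)) v := by
  rw [mul_assoc A γ]
  exact ((Real.hasDerivAt_rpow_const (Or.inl hv)).const_mul A).mul_const _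

lemma mul_deriv_pressure {A γ k t v : ℝ} (hv : v ≠ 0) :
    v * (A * γ * v ^ (γ - 1) * Real.exp (k * (γ + 1) * t)) = γ * pressure A γ k t v := by
  rw [pressure, Real.rpow_sub_one hv]
  field_simp

lemma GmapEq_eq_smul {A γ k β t : ℝ} {p : Fin 2 → ℝ} (hp : p 0 ≠ 0) :
    GmapEq A γ k β t p = transportSpeed (β * t) (pressure A γ k t) p • HmapEq β t p := by
  simp only [GmapEq, HmapEq, transportSpeed, pressure, Real.rpow_add_one hp, Matrix.smul_cons,
    Matrix.smul_empty, smul_eq_mul]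
  exact Matrix.vec2_eq (by ring) (by ring)

lemma GmapEq_eventuallyEq_smul {A γ k β t : ℝ} {p : Fin 2 → ℝ} (hp : p 0 ≠ 0) :
    GmapEq A γ k β t =ᶠ[𝓝 p] transportSpeed (β * t) (pressure A γ k t) • HmapEq β t :=
  ((continuous_apply 0).continuousAt.eventually_ne hp).mono fun _ => GmapEq_eq_smul

theorem jacobian_eigenstructure_eta_eq_k_general
    {c β t v w P' mu1 mu2 : ℝ} {P : ℝ → ℝ} {G : (Fin 2 → ℝ) → Fin 2 → ℝ}
    (hP : HasDerivAt P P' v)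
    (hG : G =ᶠ[𝓝 ![v, w]] transportSpeed c P • HmapEq β t)
    (hmu1 : mu1 = w + c - P v - v * P') (hmu2 : mu2 = w + c - P v)
    {DH DG : Matrix (Fin 2) (Fin 2) ℝ}
    (hDH : HasFDerivAt (HmapEq β t) (LinearMap.toContinuousLinearMap DH.mulVecLin) ![v, w])
    (hDG : HasFDerivAt G (LinearMap.toContinuousLinearMap DG.mulVecLin) ![v, w]) :
    (DG - mu1 • DH).det = 0 ∧ (DG - mu2 • DH).det = 0 ∧
    (DG - mu1 • DH).mulVec ![1, 0] = 0 ∧ (DG - mu2 • DH).mulVec ![1, P'] = 0 := by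
  have hφ := hasFDerivAt_transportSpeed (p := ![v, w]) c hP
  have hhom : HmapEq β t ![v, w]
      = v • LinearMap.toContinuousLinearMap DH.mulVecLin ![1, 0] := by
    rw [hasFDerivAt_HmapEq_apply hDH]
    simp [HmapEq]
  have hker1 : (DG - mu1 • DH).mulVec ![1, 0] = 0 := by
    rw [pencil_mulVec_eq_zero_iff, hmu1]
    simpa [transportSpeed, sub_eq_add_neg] using
      hasFDerivAt_apply_eq_smul_of_eq_smul_apply hφ hDH hDG hG hhom
  have hker2 : (DG - mu2 • DH).mulVec ![1, P'] = 0 := by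
    rw [pencil_mulVec_eq_zero_iff, hmu2]
    exact hasFDerivAt_apply_eq_smul_of_apply_eq_zero hφ hDH hDG hG (by simp)
  exact ⟨Matrix.det_eq_zero_of_mulVec_eq_zero_of_mem_nonZeroDivisors (i := 0) hker1 (by simp),
    Matrix.det_eq_zero_of_mulVec_eq_zero_of_mem_nonZeroDivisors (i := 0) hker2 (by simp),
    hker1, hker2⟩

/-- in the case η = k, at every point with v > 0 the Jacobian matrices DH
and DG satisfy det(DG − μᵢ DH) = 0 for i = 1,2, with eigenvectors (1,0)ᵀ for μ₁ and
(1, Aγ v^{γ−1} e^{k(γ+1)t})ᵀ for μ₂. -/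
theorem jacobian_eigenstructure_eta_eq_k
    (A γ k β t : ℝ) (v w : ℝ) (hv : 0 < v)
    (mu1 mu2 : ℝ)
    (hmu1 : mu1 = (w + β * t) - A * (γ + 1) * v ^ γ * Real.exp (k * (γ + 1) * t))
    (hmu2 : mu2 = (w + β * t) - A * v ^ γ * Real.exp (k * (γ + 1) * t))
    (DH DG : Matrix (Fin 2) (Fin 2) ℝ)
    (hDH : HasFDerivAt (HmapEq β t)
      (LinearMap.toContinuousLinearMap DH.mulVecLin) ![v, w])
    (hDG : HasFDerivAt (GmapEq A γ k β t)
      (LinearMap.toContinuousLinearMap DG.mulVecLin) ![v, w]) :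
    (DG - mu1 • DH).det = 0 ∧ (DG - mu2 • DH).det = 0 ∧
    (DG - mu1 • DH).mulVec ![1, 0] = 0 ∧
    (DG - mu2 • DH).mulVec ![1, A * γ * v ^ (γ - 1) * Real.exp (k * (γ + 1) * t)] = 0 :=
  jacobian_eigenstructure_eta_eq_k_general (hasDerivAt_pressure hv.ne')
    (GmapEq_eventuallyEq_smul hv.ne')
    (by rw [hmu1, mul_deriv_pressure hv.ne', pressure]; ring) hmu2 hDH hDG
end

section
/- Let A, γ, k ∈ ℝ with m := k(γ+1) ≠ 0, let ρ > 0 and u_L, u_R ∈ ℝ. Define, for t > 0, g(t) = ((u_L+u_R)/2)·t − (Aρ^γ/m)·((e^{mt} − 1)/(mt) − 1) and ω_δ(t) = (u_L+u_R)/2 − (ρ^γ A)(m t e^{mt} − e^{mt} + 1)/(t² m²). Then for every t > 0, g is differentiable at t with g′(t) = ω_δ(t), and g satisfies the delta-shock ODE of the η = k case with ρ_L = ρ_R = ρ: −(ρ − ρ)g′(t)g(t) + g′(t)·( (ρu_L − ρu_R)t − A((e^{mt} − 1)/m)(ρ^{γ+1} − ρ^{γ+1}) ) + (ρu_L − ρu_R)g(t)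 − (ρu_L² − ρu_R²)t + A((e^{mt} − 1)/m)(ρ^{γ+1}u_L − ρ^{γ+1}u_R) = 0. -/
/-!
With equal densities the quadratic term `g' * g` drops out, and since `ρ ^ (γ + 1) = ρ ^ γ * ρ` the
ODE becomes `ρ * (uL - uR)` times a linear equation for the derivative of `t * g t`, namely
`(t * g t)' = (uL + uR) * t - A * ρ ^ γ * (exp (m * t) - 1) / m` with `m = k * (γ + 1)`. The
function `g` is the integral of the right-hand side over `[0, t]`, divided by `t`.
-/

/-- Left-hand side of the delta-shock ODE of the case `η = k`. It is encoded pointwise: `g` and `ω`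
are the values at time `t` of `∫₀ᵗ ω_δ` and of its derivative `ω_δ`. -/
noncomputable def deltaShockResidual (A γ k ρL ρR uL uR t g ω : ℝ) : ℝ :=
  -(ρL - ρR) * ω * g
    + ω * ((ρL * uL - ρR * uR) * t
      - A * ((Real.exp (k * (γ + 1) * t) - 1) / (k * (γ + 1))) * (ρL ^ (γ + 1) - ρR ^ (γ + 1)))
    + (ρL * uL - ρR * uR) * g
    - (ρL * uL ^ 2 - ρR * uR ^ 2) * t
    + A * ((Real.exp (k * (γ + 1) * t) - 1) / (k * (γ + 1)))
      * (ρL ^ (γ + 1) * uL - ρR ^ (γ + 1) * uR)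

/-- The function `g` of the equal-density solution, with mean velocity `v = (uL + uR) / 2`,
coefficient `p = A * ρ ^ γ` and rate `m = k * (γ + 1)`. The quotients take junk values at
`m = 0` and at `t = 0`. -/
noncomputable def deltaShockDisplacement (v p m t : ℝ) : ℝ :=
  v * t - p / m * ((Real.exp (m * t) - 1) / (m * t) - 1)

/-- The delta-shock velocity `ω_δ` of the equal-density solution, with the parameters of
`deltaShockDisplacement`. -/
noncomputable def deltaShockVelocity (v p m t : ℝ) : ℝ :=
  v - p * (m * t * Real.exp (m * t) - Real.exp (m * t) + 1) / (t ^ 2 * m ^ 2)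

theorem hasDerivAt_exp_sub_one_div {x : ℝ} (hx : x ≠ 0) :
    HasDerivAt (fun y : ℝ => (Real.exp y - 1) / y)
      ((x * Real.exp x - Real.exp x + 1) / x ^ 2) x := by
  refine (((Real.hasDerivAt_exp x).sub_const 1).div (hasDerivAt_id' x) hx).congr_deriv ?_
  ring

theorem hasDerivAt_deltaShockDisplacement (v p : ℝ) {m t : ℝ} (hm : m ≠ 0) (ht : t ≠ 0) :
    HasDerivAt (deltaShockDisplacement v p m) (deltaShockVelocity v p m t) t := by
  have hquot : HasDerivAt (fun s : ℝ => (Real.exp (m * s) - 1) / (m * s))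
      ((m * t * Real.exp (m * t) - Real.exp (m * t) + 1) / (m * t) ^ 2 * m) t :=
    (hasDerivAt_exp_sub_one_div (mul_ne_zero hm ht)).comp t (hasDerivAt_const_mul m)
  refine ((hasDerivAt_const_mul v).sub ((hquot.sub_const 1).const_mul (p / m))).congr_deriv ?_
  rw [deltaShockVelocity]
  field_simp

theorem mul_deltaShockVelocity_add_deltaShockDisplacement (v p : ℝ) {m t : ℝ}
    (hm : m ≠ 0) (ht : t ≠ 0) :
    t * deltaShockVelocity v p m t + deltaShockDisplacement v p m t =
      2 * v * t - p * ((Real.exp (m * t) - 1) / m) := by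
  rw [deltaShockVelocity, deltaShockDisplacement]
  field_simp
  ring

theorem deltaShockResidual_of_equal_densities (A γ k uL uR t g ω : ℝ) {ρ : ℝ} (hρ : ρ ≠ 0) :
    deltaShockResidual A γ k ρ ρ uL uR t g ω =
      ρ * (uL - uR) * (t * ω + g - ((uL + uR) * t
        - A * ρ ^ γ * ((Real.exp (k * (γ + 1) * t) - 1) / (k * (γ + 1))))) := by
  rw [deltaShockResidual, Real.rpow_add_one hρ]
  ring

theorem delta_shock_ode_solution_equal_densities_general
    (A : ℝ) {γ k ρ : ℝ} (hm : k * (γ + 1) ≠ 0) (hρ : 0 < ρ) (uL uR : ℝ) {t : ℝ} (ht : t ≠ 0) :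
    let v := (uL + uR) / 2
    let p := A * ρ ^ γ
    let m := k * (γ + 1)
    HasDerivAt (deltaShockDisplacement v p m) (deltaShockVelocity v p m t) t ∧
      deltaShockResidual A γ k ρ ρ uL uR t
        (deltaShockDisplacement v p m t) (deltaShockVelocity v p m t) = 0 := by
  intro v p m
  refine ⟨hasDerivAt_deltaShockDisplacement v p hm ht, ?_⟩
  rw [deltaShockResidual_of_equal_densities _ _ _ _ _ _ _ _ hρ.ne',
    mul_deltaShockVelocity_add_deltaShockDisplacement v p hm ht]
  ring

/-- explicit solution of the delta-shock ODE in the case η = k with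
ρ_L = ρ_R = ρ. With m = k(γ+1) ≠ 0,
g(t) = ((u_L+u_R)/2)t − (Aρ^γ/m)((e^{mt} − 1)/(mt) − 1) and
ω_δ(t) = (u_L+u_R)/2 − Aρ^γ (mte^{mt} − e^{mt} + 1)/(t²m²), one has g′ = ω_δ on t > 0
and g satisfies the delta-shock ODE. -/
theorem delta_shock_ode_solution_equal_densities
    (A γ k : ℝ) (hm : k * (γ + 1) ≠ 0)
    (ρ : ℝ) (hρ : 0 < ρ) (uL uR : ℝ) :
    ∀ t : ℝ, 0 < t →
      HasDerivAt
        (fun s : ℝ => ((uL + uR) / 2) * s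
          - (A * ρ ^ γ / (k * (γ + 1))) *
              ((Real.exp (k * (γ + 1) * s) - 1) / (k * (γ + 1) * s) - 1))
        ((uL + uR) / 2
          - (ρ ^ γ * A) *
              (k * (γ + 1) * t * Real.exp (k * (γ + 1) * t)
                - Real.exp (k * (γ + 1) * t) + 1) / (t ^ 2 * (k * (γ + 1)) ^ 2)) t ∧
      -(ρ - ρ) *
          ((uL + uR) / 2
            - (ρ ^ γ * A) *
                (k * (γ + 1) * t * Real.exp (k * (γ + 1) * t)
                  - Real.exp (k * (γ + 1) * t) + 1) / (t ^ 2 * (k * (γ + 1)) ^ 2)) *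
          (((uL + uR) / 2) * t
            - (A * ρ ^ γ / (k * (γ + 1))) *
                ((Real.exp (k * (γ + 1) * t) - 1) / (k * (γ + 1) * t) - 1))
        + ((uL + uR) / 2
            - (ρ ^ γ * A) *
                (k * (γ + 1) * t * Real.exp (k * (γ + 1) * t)
                  - Real.exp (k * (γ + 1) * t) + 1) / (t ^ 2 * (k * (γ + 1)) ^ 2)) *
            ((ρ * uL - ρ * uR) * t
              - A * ((Real.exp (k * (γ + 1) * t) - 1) / (k * (γ + 1))) *
                  (ρ ^ (γ + 1) - ρ ^ (γ + 1)))
        + (ρ * uL - ρ * uR) *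
            (((uL + uR) / 2) * t
              - (A * ρ ^ γ / (k * (γ + 1))) *
                  ((Real.exp (k * (γ + 1) * t) - 1) / (k * (γ + 1) * t) - 1))
        - (ρ * uL ^ 2 - ρ * uR ^ 2) * t
        + A * ((Real.exp (k * (γ + 1) * t) - 1) / (k * (γ + 1))) *
            (ρ ^ (γ + 1) * uL - ρ ^ (γ + 1) * uR) = 0 := by
  intro t ht
  rw [mul_comm (ρ ^ γ) A]
  exact delta_shock_ode_solution_equal_densities_general A hm hρ uL uR ht.ne'
end

section
/- Let A, γ, k, η, β be real with η ≠ k and γ ≠ −1. Suppose v, w : ℝ × ℝ → ℝ are differentiable with v(x,t) > 0 for all (x,t), and suppose that for all (x,t) the conservation laws hold pointwise: ∂ₜ v + ∂ₓ[ v e^{(η−k)t}(w + β/(η−k)) − v β/(η−k) − A v^{γ+1} e^{k(γ+1)t} e^{(η−k)t} ] = 0 and ∂ₜ[ v(w + β/(η−k)) ] + ∂ₓ[ v(w+β/(η−k))² e^{(η−k)t} − (w+β/(η−k)) e^{(η−k)t} A v^{γ+1} e^{k(γ+1)t} − (β/(η−k))(w+β/(η−k))v ] = 0, where ∂ₜ,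 ∂ₓ are the partial derivatives of the indicated composite functions of (x,t). Define ρ(x,t) = v(x,t)e^{kt} and u(x,t) = (w(x,t) + β/(η−k))e^{(η−k)t} − β/(η−k). Then for all (x,t): ∂ₜ ρ + ∂ₓ[ ρ(u − Aρ^γ e^{ηt}) ] = kρ and ∂ₜ(ρu) + ∂ₓ[ ρu(u − Aρ^γ e^{ηt}) ] = ηρu + βρ. -/
/-!
Multiplying both components of a conservation law `f_t + F_x = 0` by `e^{at}` produces the balance
law with source `a e^{at} f`. Put `c = β / (η - k)` and `W = w + c`, so that `ρ = e^{kt} v` and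
`u = e^{(η - k)t} W - c`. For any pressure `p`, the conserved pair `(v, v W)` is carried by the
velocity `u - p`; since `ρ u = e^{ηt} v W - c e^{kt} v`, the balance laws for `ρ` and `ρ u` are
combinations of the two rescaled conservation laws, and `c (η - k) = β` gives the source `β ρ`.
-/

/-- Partial derivative with respect to the spatial variable x (first coordinate). -/
noncomputable def pdx (f : ℝ × ℝ → ℝ) (x t : ℝ) : ℝ :=
  deriv (fun y => f (y, t)) x

/-- Partial derivative with respect to the time variable t (second coordinate). -/
noncomputable def pdt (f : ℝ × ℝ → ℝ) (x t : ℝ) : ℝ :=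
  deriv (fun τ => f (x, τ)) t

section BalanceLaw

variable {f g F G : ℝ × ℝ → ℝ} {x t : ℝ}

lemma balance_law_exp_mul_of_conservation_law (a : ℝ)
    (hf : DifferentiableAt ℝ (fun τ => f (x, τ)) t) (h : pdt f x t + pdx F x t = 0) :
    pdt (fun q => Real.exp (a * q.2) * f q) x t + pdx (fun q => Real.exp (a * q.2) * F q) x t =
      a * (Real.exp (a * t) * f (x, t)) := by
  have hexp : HasDerivAt (fun τ => Real.exp (a * τ)) (Real.exp (a * t) * a) t := by
    simpa using ((hasDerivAt_id t).const_mul a).exp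
  have ht : pdt (fun q => Real.exp (a * q.2) * f q) x t =
      Real.exp (a * t) * a * f (x, t) + Real.exp (a * t) * pdt f x t :=
    (hexp.mul hf.hasDerivAt).deriv
  have hx : pdx (fun q => Real.exp (a * q.2) * F q) x t = Real.exp (a * t) * pdx F x t :=
    deriv_const_mul_field (Real.exp (a * t))
  rw [ht, hx]
  linear_combination Real.exp (a * t) * h

lemma balance_law_sub_const_mul {r s : ℝ} (c : ℝ)
    (hf : DifferentiableAt ℝ (fun τ => f (x, τ)) t)
    (hg : DifferentiableAt ℝ (fun τ => g (x, τ)) t)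
    (hF : DifferentiableAt ℝ (fun y => F (y, t)) x)
    (hG : DifferentiableAt ℝ (fun y => G (y, t)) x)
    (hfF : pdt f x t + pdx F x t = r) (hgG : pdt g x t + pdx G x t = s) :
    pdt (fun q => f q - c * g q) x t + pdx (fun q => F q - c * G q) x t = r - c * s := by
  have ht : pdt (fun q => f q - c * g q) x t = pdt f x t - c * pdt g x t :=
    (hf.hasDerivAt.sub (hg.hasDerivAt.const_mul c)).deriv
  have hx : pdx (fun q => F q - c * G q) x t = pdx F x t - c * pdx G x t :=
    (hF.hasDerivAt.sub (hG.hasDerivAt.const_mul c)).deriv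
  rw [ht, hx]
  linear_combination hfF - c * hgG

end BalanceLaw

theorem transformation_back_to_balance_laws_eta_ne_k_general
    {k η β c : ℝ} (hc : c * (η - k) = β) {v W p ρ u : ℝ × ℝ → ℝ} {x t : ℝ}
    (hv : DifferentiableAt ℝ v (x, t)) (hW : DifferentiableAt ℝ W (x, t))
    (hp : DifferentiableAt ℝ p (x, t))
    (hρ : ρ = fun q => v q * Real.exp (k * q.2))
    (hu : u = fun q => W q * Real.exp ((η - k) * q.2) - c)
    (h_mass : pdt v x t + pdx (fun q => v q * (u q - p q)) x t = 0)
    (h_momentum :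
      pdt (fun q => v q * W q) x t + pdx (fun q => v q * W q * (u q - p q)) x t = 0) :
    pdt ρ x t + pdx (fun q => ρ q * (u q - p q)) x t = k * ρ (x, t) ∧
      pdt (fun q => ρ q * u q) x t + pdx (fun q => ρ q * u q * (u q - p q)) x t =
        η * ρ (x, t) * u (x, t) + β * ρ (x, t) := by
  have hρ_comm : ρ = fun q => Real.exp (k * q.2) * v q := by simp only [hρ, mul_comm]
  have hρu_eq (q : ℝ × ℝ) :
      ρ q * u q = Real.exp (η * q.2) * (v q * W q) - c * ρ q := by
    have hexp : Real.exp (η * q.2) = Real.exp (k * q.2) * Real.exp ((η - k) * q.2) := by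
      rw [← Real.exp_add]
      ring_nf
    rw [hρ, hu, hexp]
    ring
  have hρ_diff : DifferentiableAt ℝ ρ (x, t) := by rw [hρ]; fun_prop
  have hu_diff : DifferentiableAt ℝ u (x, t) := by rw [hu]; fun_prop
  have hρ_law : pdt ρ x t + pdx (fun q => ρ q * (u q - p q)) x t = k * ρ (x, t) := by
    simpa only [hρ_comm, mul_assoc] using
      balance_law_exp_mul_of_conservation_law k (by fun_prop) h_mass
  have hvW_law := balance_law_exp_mul_of_conservation_law η (by fun_prop) h_momentum
  have hρu_law : pdt (fun q => ρ q * u q) x t + pdx (fun q => ρ q * u q * (u q - p q)) x t =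
      η * (Real.exp (η * t) * (v (x, t) * W (x, t))) - c * (k * ρ (x, t)) := by
    simpa only [hρu_eq, sub_mul, mul_assoc] using
      balance_law_sub_const_mul c
        (by fun_prop) (by fun_prop) (by fun_prop) (by fun_prop) hvW_law hρ_law
  refine ⟨hρ_law, hρu_law.trans ?_⟩
  linear_combination ρ (x, t) * hc - η * hρu_eq (x, t)

section ChaplyginFlux

variable (A γ k η : ℝ) {a : ℝ} (t : ℝ)

lemma mul_chaplygin_pressure (ha : 0 < a) :
    a * (A * (a * Real.exp (k * t)) ^ γ * Real.exp (η * t)) =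
      A * a ^ (γ + 1) * Real.exp (k * (γ + 1) * t) * Real.exp ((η - k) * t) := by
  have hpow : (a * Real.exp (k * t)) ^ γ = a ^ γ * Real.exp (k * t * γ) := by
    rw [Real.mul_rpow ha.le (Real.exp_pos _).le, ← Real.exp_mul]
  have hexp : Real.exp (k * t * γ) * Real.exp (η * t) =
      Real.exp (k * (γ + 1) * t) * Real.exp ((η - k) * t) := by
    rw [← Real.exp_add, ← Real.exp_add]
    ring_nf
  rw [hpow, Real.rpow_add_one ha.ne']
  linear_combination A * a ^ γ * a * hexp

lemma chaplygin_mass_flux_eq (β b : ℝ) (ha : 0 < a) :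
    a * Real.exp ((η - k) * t) * b - a * β / (η - k)
        - A * a ^ (γ + 1) * Real.exp (k * (γ + 1) * t) * Real.exp ((η - k) * t) =
      a * ((b * Real.exp ((η - k) * t) - β / (η - k))
        - A * (a * Real.exp (k * t)) ^ γ * Real.exp (η * t)) := by
  linear_combination mul_chaplygin_pressure A γ k η t ha

lemma chaplygin_momentum_flux_eq (b c : ℝ) (ha : 0 < a) :
    a * b ^ 2 * Real.exp ((η - k) * t)
        - b * Real.exp ((η - k) * t) * A * a ^ (γ + 1) * Real.exp (k * (γ + 1) * t)
        - c * b * a =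
      a * b * ((b * Real.exp ((η - k) * t) - c)
        - A * (a * Real.exp (k * t)) ^ γ * Real.exp (η * t)) := by
  linear_combination b * mul_chaplygin_pressure A γ k η t ha

end ChaplyginFlux

/-- case η ≠ k: if (v, w) is a differentiable pointwise solution of the
transformed conservative system, then ρ = v e^{kt},
u = (w + β/(η−k))e^{(η−k)t} − β/(η−k) is a pointwise solution of the original balance
laws ρ_t + (ρ(u − Aρ^γ e^{ηt}))_x = kρ and (ρu)_t + (ρu(u − Aρ^γ e^{ηt}))_x = ηρu + βρ. -/
theorem transformation_back_to_balance_laws_eta_ne_k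
    (A γ k η β : ℝ) (hηk : η ≠ k) (hγ : γ ≠ -1)
    (v w : ℝ × ℝ → ℝ)
    (hv : Differentiable ℝ v) (hw : Differentiable ℝ w)
    (hvpos : ∀ p : ℝ × ℝ, 0 < v p)
    (h1 : ∀ x t : ℝ,
      pdt v x t +
        pdx (fun p => v p * Real.exp ((η - k) * p.2) * (w p + β / (η - k))
          - v p * β / (η - k)
          - A * (v p) ^ (γ + 1) * Real.exp (k * (γ + 1) * p.2) *
              Real.exp ((η - k) * p.2)) x t = 0)
    (h2 : ∀ x t : ℝ,
      pdt (fun p => v p * (w p + β / (η - k))) x t +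
        pdx (fun p => v p * (w p + β / (η - k)) ^ (2 : ℕ) * Real.exp ((η - k) * p.2)
          - (w p + β / (η - k)) * Real.exp ((η - k) * p.2) * A * (v p) ^ (γ + 1) *
              Real.exp (k * (γ + 1) * p.2)
          - (β / (η - k)) * (w p + β / (η - k)) * v p) x t = 0) :
    ∀ x t : ℝ,
      pdt (fun p => v p * Real.exp (k * p.2)) x t +
        pdx (fun p => (v p * Real.exp (k * p.2)) *
          (((w p + β / (η - k)) * Real.exp ((η - k) * p.2) - β / (η - k))
            - A * (v p * Real.exp (k * p.2)) ^ γ * Real.exp (η * p.2))) x t =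
        k * (v (x, t) * Real.exp (k * t)) ∧
      pdt (fun p => (v p * Real.exp (k * p.2)) *
            ((w p + β / (η - k)) * Real.exp ((η - k) * p.2) - β / (η - k))) x t +
        pdx (fun p => (v p * Real.exp (k * p.2)) *
          ((w p + β / (η - k)) * Real.exp ((η - k) * p.2) - β / (η - k)) *
          (((w p + β / (η - k)) * Real.exp ((η - k) * p.2) - β / (η - k))
            - A * (v p * Real.exp (k * p.2)) ^ γ * Real.exp (η * p.2))) x t =
        η * (v (x, t) * Real.exp (k * t)) *
            ((w (x, t) + β / (η - k)) * Real.exp ((η - k) * t) - β / (η - k))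
          + β * (v (x, t) * Real.exp (k * t)) := by
  have hp : Differentiable ℝ fun q : ℝ × ℝ =>
      A * (v q * Real.exp (k * q.2)) ^ γ * Real.exp (η * q.2) := by
    have hρ_ne (q : ℝ × ℝ) : v q * Real.exp (k * q.2) ≠ 0 :=
      (mul_pos (hvpos q) (Real.exp_pos _)).ne'
    fun_prop (disch := simp [hρ_ne])
  simp only [chaplygin_mass_flux_eq A γ k η _ β _ (hvpos _)] at h1
  simp only [chaplygin_momentum_flux_eq A γ k η _ _ _ (hvpos _)] at h2
  exact fun x t => transformation_back_to_balance_laws_eta_ne_k_general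
    (div_mul_cancel₀ β (sub_ne_zero.mpr hηk)) (hv _) ((hw _).add_const _) (hp _) rfl rfl
    (h1 x t) (h2 x t)
end
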